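/- (Bourgain–Chang) For every real b ≥ 0 there exists a positive integer k = k(b) such that for every finite set A of nonzero rational numbers with |A| ≥ 2, max{|kA|, |A^{(k)}|} ≥ |A|^b. -/

import Mathlib

open Finset Pointwise

/-- The `k`-fold sumset of a finite set `A` of rationals. -/
def kfoldSum (k : ℕ) (A : Finset ℚ) : Finset ℚ :=
  (Fintype.piFinset fun _ : Fin k => A).image fun f => ∑ i, f i

/-- The `k`-fold product set of a finite set `A` of rationals. -/
def kfoldProd (k : ℕ) (A : Finset ℚ) : Finset ℚ :=
  (Fintype.piFinset fun _ : Fin k => A).image fun f => ∏ i, f i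

open MeasureTheory AddCircle in
lemma integral_fourier_eq_ite (n : ℤ) :
    ∫ t : UnitAddCircle, fourier n t ∂haarAddCircle = if n = 0 then 1 else 0 := by
  have h := (orthonormal_iff_ite.mp (orthonormal_fourier (T := 1))) 0 n
  rw [ContinuousMap.inner_toLp (𝕜 := ℂ) haarAddCircle (fourier 0) (fourier n)] at h
  simpa [eq_comm] using h

open MeasureTheory AddCircle in
/-- The integral of a product of trigonometric polynomials counts the weighted solutions of a
linear equation. -/
lemma integral_prod_sum_fourier {ι : Type*} [Fintype ι] [DecidableEq ι] (A : Finset ℤ)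
    (g : ι → ℤ → ℝ) (ε : ι → ℤ) :
    ∫ t : UnitAddCircle, ∏ i, ∑ a ∈ A, (g i a : ℂ) * fourier (ε i * a) t ∂haarAddCircle =
      ((∑ x ∈ Fintype.piFinset fun _ : ι => A,
        if ∑ i, ε i * x i = 0 then ∏ i, g i (x i) else 0 : ℝ) : ℂ) := by
  have hprod : ∀ (s : Finset ι) (x : ι → ℤ) (t : UnitAddCircle),
      ∏ i ∈ s, (fourier (x i) t : ℂ) = fourier (∑ i ∈ s, x i) t := by
    intro s x t
    induction s using Finset.induction_on with
    | empty => simp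
    | insert a s ha ih => rw [prod_insert ha, sum_insert ha, fourier_add, ih]
  simp_rw [Finset.prod_univ_sum, prod_mul_distrib, hprod]
  rw [integral_finsetSum]
  · push_cast
    refine sum_congr rfl fun x _ => ?_
    rw [integral_const_mul, integral_fourier_eq_ite]
    split_ifs <;> simp
  · intro x _
    apply Continuous.integrable_of_hasCompactSupport
    · fun_prop
    · exact HasCompactSupport.of_compactSpace _

/-- The trigonometric polynomial with coefficients `f` and frequencies in `A`. -/
noncomputable def trigPoly (A : Finset ℤ) (f : ℤ → ℝ) (t : UnitAddCircle) : ℂ :=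
  ∑ a ∈ A, (f a : ℂ) * fourier a t

@[fun_prop]
lemma continuous_trigPoly (A : Finset ℤ) (f : ℤ → ℝ) : Continuous (trigPoly A f) := by
  unfold trigPoly
  fun_prop

open AddCircle in
/-- The `2h`-th moment of a trigonometric polynomial. -/
noncomputable def moment (h : ℕ) (A : Finset ℤ) (f : ℤ → ℝ) : ℝ :=
  ∫ t, ‖trigPoly A f t‖ ^ (2 * h) ∂haarAddCircle

/-- The signs of the `2h` variables in the equation `a₁ + ⋯ + aₕ = b₁ + ⋯ + bₕ`. -/
def halfSign (h : ℕ) : Fin h ⊕ Fin h → ℤ := Sum.elim (fun _ => 1) (fun _ => -1)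

lemma moment_eq_sum (h : ℕ) (A : Finset ℤ) (f : ℤ → ℝ) :
    moment h A f = ∑ x ∈ Fintype.piFinset fun _ : Fin h ⊕ Fin h => A,
      if ∑ i, halfSign h i * x i = 0 then ∏ i, f (x i) else 0 := by
  have key := integral_prod_sum_fourier A (fun _ : Fin h ⊕ Fin h => f) (halfSign h)
  rw [← Complex.ofReal_inj, ← key, moment, ← integral_complex_ofReal]
  congr 1
  ext t
  have hconj : ∑ a ∈ A, (f a : ℂ) * fourier (-a) t = (starRingEnd ℂ) (trigPoly A f t) := by
    simp [trigPoly, map_sum]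
  simp only [Fintype.prod_sum_type, halfSign, Sum.elim_inl, Sum.elim_inr, one_mul, neg_mul,
    prod_const, card_univ, Fintype.card_fin, hconj]
  rw [← trigPoly, ← mul_pow, Complex.mul_conj, Complex.normSq_eq_norm_sq, pow_mul]
  push_cast
  rfl

open MeasureTheory AddCircle in
lemma integral_sq_mul_pow_le {h : ℕ} (hh : 2 ≤ h) (F G : UnitAddCircle → ℝ)
    (hF : Continuous F) (hG : Continuous G) (hG0 : ∀ t, 0 ≤ G t) :
    ∫ t, F t ^ 2 * G t ^ (2 * h - 2) ∂haarAddCircle ≤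
      (∫ t, F t ^ (2 * h) ∂haarAddCircle) ^ (1 / h : ℝ) *
        (∫ t, G t ^ (2 * h) ∂haarAddCircle) ^ (1 - 1 / h : ℝ) := by
  have hh' : (1 : ℝ) < h := by exact_mod_cast hh
  have hpq : (h : ℝ).HolderConjugate (h / (h - 1) : ℝ) := by
    rw [Real.holderConjugate_iff]
    refine ⟨hh', ?_⟩
    field_simp
    ring
  have hmem : ∀ (f : UnitAddCircle → ℝ) (p : ENNReal), Continuous f →
      MemLp f p haarAddCircle := by
    intro f p hf
    obtain ⟨C, hC⟩ := isCompact_univ.exists_bound_of_continuousOn hf.continuousOn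
    exact MemLp.of_bound hf.aestronglyMeasurable C (.of_forall fun t => hC t trivial)
  have key := integral_mul_le_Lp_mul_Lq_of_nonneg (μ := haarAddCircle) hpq
    (f := fun t => F t ^ 2) (g := fun t => G t ^ (2 * h - 2))
    (.of_forall fun t => by positivity) (.of_forall fun t => pow_nonneg (hG0 t) _)
    (hmem _ _ (by fun_prop)) (hmem _ _ (by fun_prop))
  have e1 : ∀ t, ((F t ^ 2) ^ (h : ℝ) : ℝ) = F t ^ (2 * h) := fun t => by
    rw [Real.rpow_natCast, pow_mul]
  have e2 : ∀ t, ((G t ^ (2 * h - 2)) ^ (h / (h - 1) : ℝ) : ℝ) = G t ^ (2 * h) := fun t => by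
    rw [← Real.rpow_natCast, ← Real.rpow_mul (hG0 t), ← Real.rpow_natCast]
    congr 1
    rw [Nat.cast_sub (by lia)]
    push_cast
    have : (h : ℝ) - 1 ≠ 0 := by linarith
    field_simp
  simp_rw [e1, e2] at key
  have e3 : (1 / (h / (h - 1)) : ℝ) = 1 - 1 / h := by field_simp
  rwa [e3] at key

/-- In a vanishing signed sum of nonzero integers two terms have the same `p`-adic valuation. -/
lemma exists_padicValInt_eq {ι : Type*} [Fintype ι] [Nonempty ι] [DecidableEq ι] (p : ℕ)
    [Fact p.Prime] (ε x : ι → ℤ) (hε : ∀ i, IsUnit (ε i)) (hx : ∀ i, x i ≠ 0)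
    (hsum : ∑ i, ε i * x i = 0) :
    ∃ s t, s ≠ t ∧ padicValInt p (x s) = padicValInt p (x t) := by
  by_contra! hne
  obtain ⟨s, -, hs⟩ := exists_min_image univ (fun i => padicValInt p (x i)) univ_nonempty
  have hdvd : ∀ i, i ≠ s → (p : ℤ) ^ (padicValInt p (x s) + 1) ∣ ε i * x i := by
    intro i hi
    refine Dvd.dvd.mul_left ?_ _
    rw [padicValInt_dvd_iff]
    exact Or.inr (lt_of_le_of_ne (hs i (mem_univ i)) (hne s i hi.symm))
  have hs_dvd : (p : ℤ) ^ (padicValInt p (x s) + 1) ∣ ε s * x s := by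
    rw [← add_sum_erase univ _ (mem_univ s)] at hsum
    rw [eq_neg_of_add_eq_zero_left hsum, dvd_neg]
    exact dvd_sum fun i hi => hdvd i (ne_of_mem_erase hi)
  rw [(hε s).dvd_mul_left, padicValInt_dvd_iff] at hs_dvd
  rcases hs_dvd with h | h
  · exact hx s h
  · lia

open MeasureTheory AddCircle in
/-- Chang's lemma: the trigonometric polynomials of the fibres of a `p`-adic valuation are
approximately orthogonal in `L^{2h}`. -/
lemma moment_le_sum_fibres {h : ℕ} (hh : 2 ≤ h) (p : ℕ) [Fact p.Prime] {A : Finset ℤ}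
    (hA : (0 : ℤ) ∉ A) {f : ℤ → ℝ} (hf : ∀ a, 0 ≤ f a) :
    moment h A f ≤ ∑ _st ∈ (univ : Finset (Fin h ⊕ Fin h)).offDiag, ∑ j ∈ A.image (padicValInt p),
      ∫ t, ‖trigPoly {a ∈ A | padicValInt p a = j} f t‖ ^ 2 * ‖trigPoly A f t‖ ^ (2 * h - 2)
        ∂haarAddCircle := by
  classical
  let g : (Fin h ⊕ Fin h) × (Fin h ⊕ Fin h) → ℕ → (Fin h ⊕ Fin h) → ℤ → ℝ := fun st j i a =>
    if i = st.1 ∨ i = st.2 then (if padicValInt p a = j then f a else 0) else f a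
  have hg0 : ∀ st j i a, 0 ≤ g st j i a := by
    intro st j i a
    simp only [g]
    split_ifs <;> simp [hf]
  have : Nonempty (Fin h ⊕ Fin h) := ⟨Sum.inl ⟨0, by lia⟩⟩
  have hpoint : ∀ x ∈ Fintype.piFinset fun _ : Fin h ⊕ Fin h => A,
      (if ∑ i, halfSign h i * x i = 0 then ∏ i, f (x i) else 0) ≤
        ∑ st ∈ (univ : Finset (Fin h ⊕ Fin h)).offDiag, ∑ j ∈ A.image (padicValInt p),
          if ∑ i, halfSign h i * x i = 0 then ∏ i, g st j i (x i) else 0 := by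
    intro x hx
    rw [Fintype.mem_piFinset] at hx
    split_ifs with hsum
    · obtain ⟨s, t, hst, hv⟩ := exists_padicValInt_eq p (halfSign h) x
        (by rintro (i | i) <;> simp [halfSign]) (fun i hi => hA (hi ▸ hx i)) hsum
      have e : ∏ i, f (x i) = ∏ i, g (s, t) (padicValInt p (x s)) i (x i) := by
        refine prod_congr rfl fun i _ => ?_
        simp only [g]
        split_ifs with h1 h2
        · rfl
        · rcases h1 with rfl | rfl
          · exact absurd rfl h2
          · exact absurd hv.symm h2
        · rfl
      rw [e]
      refine le_trans ?_ (single_le_sum (f := fun st => ∑ j ∈ A.image (padicValInt p),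
          ∏ i, g st j i (x i)) (fun st _ => sum_nonneg fun j _ => prod_nonneg fun i _ => hg0 ..)
          (show (s, t) ∈ _ by simp [hst]))
      exact single_le_sum (f := fun j => ∏ i, g (s, t) j i (x i))
          (fun j _ => prod_nonneg fun i _ => hg0 ..) (mem_image_of_mem _ (hx s))
    · simp
  rw [moment_eq_sum]
  refine (sum_le_sum hpoint).trans ?_
  rw [sum_comm]
  refine sum_le_sum fun st hst => ?_
  rw [sum_comm]
  refine sum_le_sum fun j _ => ?_
  have key := integral_prod_sum_fourier A (g st j) (halfSign h)
  refine (Real.le_norm_self _).trans ?_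
  rw [← Complex.norm_real, ← key]
  refine (norm_integral_le_integral_norm _).trans_eq ?_
  congr 1
  ext t
  have hsign : ∀ (u : ℤ → ℝ) (i : Fin h ⊕ Fin h),
      ‖∑ a ∈ A, (u a : ℂ) * fourier (halfSign h i * a) t‖ = ‖trigPoly A u t‖ := by
    rintro u (i | i)
    · simp [halfSign, trigPoly]
    · rw [← Complex.norm_conj (trigPoly A u t)]
      simp [halfSign, trigPoly]
  have hfib : trigPoly A (fun a => if padicValInt p a = j then f a else 0) t =
      trigPoly {a ∈ A | padicValInt p a = j} f t := by
    simp only [trigPoly, sum_filter]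
    refine sum_congr rfl fun a _ => ?_
    split_ifs <;> simp
  have hfac : ∀ i, ‖∑ a ∈ A, (g st j i a : ℂ) * fourier (halfSign h i * a) t‖ =
      if i = st.1 ∨ i = st.2 then ‖trigPoly {a ∈ A | padicValInt p a = j} f t‖
        else ‖trigPoly A f t‖ := by
    intro i
    rw [hsign]
    split_ifs with hi
    · simp only [g, hi, if_true, hfib]
    · simp only [g, hi, if_false]
  rw [norm_prod, prod_congr rfl fun i _ => hfac i, prod_ite, prod_const, prod_const]
  have hcard : #{i | i = st.1 ∨ i = st.2} = 2 := by
    rw [← card_pair (mem_offDiag.mp hst).2.2]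
    congr 1
    ext i
    simp
  have hcard' : #{i | ¬(i = st.1 ∨ i = st.2)} = 2 * h - 2 := by
    have := card_filter_add_card_filter_not (s := (univ : Finset (Fin h ⊕ Fin h)))
      (fun i => i = st.1 ∨ i = st.2)
    simp only [card_univ, Fintype.card_sum, Fintype.card_fin] at this
    lia
  rw [hcard, hcard']

lemma moment_nonneg (h : ℕ) (A : Finset ℤ) (f : ℤ → ℝ) : 0 ≤ moment h A f :=
  MeasureTheory.integral_nonneg fun _ => by positivity

lemma moment_congr (h : ℕ) {A : Finset ℤ} {f g : ℤ → ℝ} (hfg : ∀ a ∈ A, f a = g a) :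
    moment h A f = moment h A g := by
  have : trigPoly A f = trigPoly A g := by
    ext t
    exact sum_congr rfl fun a ha => by rw [hfg a ha]
  rw [moment, moment, this]

lemma moment_const_mul (h : ℕ) (A : Finset ℤ) (f : ℤ → ℝ) (c : ℝ) :
    moment h A (fun a => c * f a) = c ^ (2 * h) * moment h A f := by
  rw [moment, moment, ← MeasureTheory.integral_const_mul]
  congr 1
  ext t
  have : trigPoly A (fun a => c * f a) t = c * trigPoly A f t := by
    simp only [trigPoly, mul_sum]
    exact sum_congr rfl fun a _ => by push_cast; ring
  rw [this, norm_mul, mul_pow, Complex.norm_real, Real.norm_eq_abs, pow_mul |c|, sq_abs, pow_mul c]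

/-- `A` carries a nonnegative weight of total mass `φ` whose `2h`-th moment is at most `φ ^ h`. -/
def Spread (h : ℕ) (A : Finset ℤ) (φ : ℝ) : Prop :=
  ∃ f : ℤ → ℝ, (∀ a, 0 ≤ f a) ∧ ∑ a ∈ A, f a = φ ∧ moment h A f ≤ φ ^ h

lemma Spread.mono {h : ℕ} {A A' : Finset ℤ} {φ : ℝ} (hA : Spread h A φ) (hAA' : A ⊆ A') :
    Spread h A' φ := by
  obtain ⟨f, hf, hsum, hmom⟩ := hA
  refine ⟨fun a => if a ∈ A then f a else 0, fun a => ?_, ?_, ?_⟩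
  · dsimp only
    split_ifs <;> simp [hf]
  · rw [← hsum, ← sum_filter, filter_mem_eq_inter, inter_eq_right.mpr hAA']
  · have : trigPoly A' (fun a => if a ∈ A then f a else 0) = trigPoly A f := by
      ext t
      rw [trigPoly, trigPoly, ← sum_subset hAA']
      · exact sum_congr rfl fun a ha => by simp [ha]
      · intro a _ ha
        simp [ha]
    rwa [moment, this]

lemma spread_one_of_mem {h : ℕ} {A : Finset ℤ} {a : ℤ} (ha : a ∈ A) : Spread h A 1 := by
  refine Spread.mono (A := {a}) ⟨fun _ => 1, fun _ => zero_le_one, by simp, ?_⟩ (by simpa)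
  have (t : UnitAddCircle) : ‖(fourier a t : ℂ)‖ = 1 := Circle.norm_coe _
  simp only [moment, trigPoly, sum_singleton, Complex.ofReal_one, one_mul, this]
  simp

lemma Spread.of_fibres {h : ℕ} (hh : 2 ≤ h) (p : ℕ) [Fact p.Prime] {A : Finset ℤ}
    (hA : (0 : ℤ) ∉ A) {φ : ℕ → ℝ} (hφ : ∀ j ∈ A.image (padicValInt p), 0 ≤ φ j)
    (hfib : ∀ j ∈ A.image (padicValInt p), Spread h {a ∈ A | padicValInt p a = j} (φ j)) :
    Spread h A ((∑ j ∈ A.image (padicValInt p), φ j) / (2 * h) ^ 2) := by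
  choose! F hF0 hFsum hFmom using hfib
  set S := ∑ j ∈ A.image (padicValInt p), φ j with hS
  have hh0 : (0 : ℝ) < h := by positivity
  have hS0 : 0 ≤ S := sum_nonneg hφ
  let f : ℤ → ℝ := fun a => if a ∈ A then F (padicValInt p a) a else 0
  have hf0 : ∀ a, 0 ≤ f a := fun a => by
    by_cases ha : a ∈ A
    · simpa [f, ha] using hF0 _ (mem_image_of_mem _ ha) a
    · simp [f, ha]
  have hfF : ∀ j, ∀ a ∈ {a ∈ A | padicValInt p a = j}, f a = F j a := by
    intro j a ha
    rw [mem_filter] at ha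
    simp [f, ha.1, ha.2]
  have hmom : moment h A f ≤ ((2 * h) ^ 2 * S) ^ h := by
    set X := moment h A f with hX
    have hX0 : 0 ≤ X := moment_nonneg h A f
    have hstep : X ≤ ((2 * h) ^ 2 * S) * X ^ (1 - 1 / h : ℝ) := by
      refine (moment_le_sum_fibres hh p hA hf0).trans ?_
      rw [sum_const, nsmul_eq_mul, mul_assoc, hS, sum_mul]
      refine mul_le_mul ?_ (sum_le_sum fun j hj => ?_) ?_ (by positivity)
      · norm_cast
        rw [offDiag_card]
        simp only [card_univ, Fintype.card_sum, Fintype.card_fin]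
        calc _ ≤ (h + h) * (h + h) := Nat.sub_le _ _
          _ = (2 * h) ^ 2 := by ring
      · refine (integral_sq_mul_pow_le hh _ _ (by fun_prop) (by fun_prop)
          (fun _ => norm_nonneg _)).trans ?_
        refine mul_le_mul_of_nonneg_right ?_ (by positivity)
        change (moment h _ f) ^ _ ≤ _
        rw [moment_congr h (hfF j)]
        calc _ ≤ (φ j ^ h) ^ (1 / h : ℝ) :=
              Real.rpow_le_rpow (moment_nonneg ..) (hFmom j hj) (by positivity)
          _ = φ j := by
              rw [one_div, Real.pow_rpow_inv_natCast (hφ j hj) (by lia)]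
      · refine sum_nonneg fun j _ => MeasureTheory.integral_nonneg fun _ => by positivity
    rcases hX0.eq_or_lt with hX' | hX'
    · rw [← hX']
      positivity
    · have h1 : X ^ (1 / h : ℝ) ≤ (2 * h) ^ 2 * S := by
        rw [Real.rpow_sub hX', Real.rpow_one] at hstep
        have h2 : 0 < X ^ (1 / h : ℝ) := by positivity
        rw [mul_div_assoc', le_div_iff₀ h2, mul_comm] at hstep
        exact le_of_mul_le_mul_right hstep hX'
      calc X = (X ^ (1 / h : ℝ)) ^ h := by
            rw [one_div, Real.rpow_inv_natCast_pow hX0 (by lia)]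
        _ ≤ _ := by gcongr
  refine ⟨fun a => ((2 * h : ℝ) ^ 2)⁻¹ * f a, fun a => ?_, ?_, ?_⟩
  · have := hf0 a
    positivity
  · rw [← mul_sum, div_eq_inv_mul, hS, ← sum_fiberwise_of_maps_to
      (fun a ha => mem_image_of_mem (padicValInt p) ha)]
    congr 1
    refine sum_congr rfl fun j hj => ?_
    rw [← hFsum j hj]
    exact sum_congr rfl (hfF j)
  · rw [moment_const_mul]
    calc _ ≤ (((2 * h : ℝ) ^ 2)⁻¹) ^ (2 * h) * ((2 * h) ^ 2 * S) ^ h := by gcongr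
      _ = (S / (2 * h) ^ 2) ^ h := by
        rw [pow_mul, ← mul_pow]
        congr 1
        field_simp

lemma nsmul_eq_image_sum (k : ℕ) (A : Finset ℤ) :
    k • A = (Fintype.piFinset fun _ : Fin k => A).image fun f => ∑ i, f i := by
  ext x
  simp only [mem_nsmul, mem_image, Fintype.mem_piFinset, List.sum_ofFn]
  constructor
  · rintro ⟨f, rfl⟩
    exact ⟨fun i => f i, fun i => (f i).2, rfl⟩
  · rintro ⟨f, hf, rfl⟩
    exact ⟨fun i => ⟨f i, hf i⟩, rfl⟩

lemma moment_eq_sum_sq (h : ℕ) (A : Finset ℤ) (f : ℤ → ℝ) :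
    moment h A f = ∑ n ∈ h • A,
      (∑ u ∈ Fintype.piFinset fun _ : Fin h => A with ∑ i, u i = n, ∏ i, f (u i)) ^ 2 := by
  classical
  set P := Fintype.piFinset fun _ : Fin h => A
  have hsplit : moment h A f = ∑ u ∈ P, ∑ v ∈ P,
      if ∑ i, v i = ∑ i, u i then (∏ i, f (u i)) * ∏ i, f (v i) else 0 := by
    rw [moment_eq_sum, ← sum_product']
    refine sum_equiv (Equiv.sumArrowEquivProdArrow _ _ _) ?_ ?_
    · intro x
      simp [P, Fintype.mem_piFinset]
    · intro x _
      simp only [halfSign, Fintype.sum_sum_type, Fintype.prod_sum_type, Sum.elim_inl,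
        Sum.elim_inr, one_mul, neg_mul, sum_neg_distrib, Equiv.sumArrowEquivProdArrow]
      refine if_congr ?_ rfl rfl
      constructor <;> intro h <;> simp at h ⊢ <;> linarith
  rw [hsplit, nsmul_eq_image_sum, ← sum_fiberwise_of_maps_to
    (fun u hu => mem_image_of_mem (fun u : Fin h → ℤ => ∑ i, u i) hu)]
  refine sum_congr rfl fun n _ => ?_
  rw [sq, sum_mul_sum]
  refine sum_congr rfl fun u hu => ?_
  rw [(mem_filter.mp hu).2, ← sum_filter]

lemma Spread.pow_le_card_nsmul {h : ℕ} {A : Finset ℤ} {φ : ℝ} (hA : Spread h A φ) (hφ : 0 < φ) :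
    φ ^ h ≤ #(h • A) := by
  classical
  obtain ⟨f, -, hsum, hmom⟩ := hA
  rw [moment_eq_sum_sq] at hmom
  have hpow : φ ^ h = ∑ n ∈ h • A,
      ∑ u ∈ Fintype.piFinset fun _ : Fin h => A with ∑ i, u i = n, ∏ i, f (u i) := by
    rw [nsmul_eq_image_sum, sum_fiberwise_of_maps_to
      (fun u hu => mem_image_of_mem (fun u : Fin h → ℤ => ∑ i, u i) hu), ← hsum, sum_pow']
  have hcs := sq_sum_le_card_mul_sum_sq (s := h • A) (f := fun n =>
    ∑ u ∈ Fintype.piFinset fun _ : Fin h => A with ∑ i, u i = n, ∏ i, f (u i))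
  rw [← hpow, sq] at hcs
  have hle := hcs.trans (mul_le_mul_of_nonneg_left hmom (Nat.cast_nonneg _))
  exact le_of_mul_le_mul_right hle (by positivity)

open Filter Topology in
lemma exists_exponent (C L : ℝ) (hC : 1 ≤ C) (hL : 0 < L) :
    ∃ η : ℝ, 0 < η ∧ η < 1 ∧ ∀ X y H : ℝ, 0 < X → X ≤ 1 → 1 ≤ y → y ≤ H →
      1 + X ^ (L * η) ≤ H → X ^ (L * η) * (y + 1) ≤ H →
      (1 + (C - 1) * X) ^ (L * η) * y ^ (1 - η) ≤ H := by
  set M : ℝ := C ^ L with hM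
  have hM1 : 1 ≤ M := Real.one_le_rpow hC hL.le
  set x₀ : ℝ := 1 - 1 / (4 * M) with hx₀
  have hM4 : 1 / (4 * M) ≤ 1 / 4 := by gcongr; linarith
  have hM4' : 0 < 1 / (4 * M) := by positivity
  have hx₀0 : 0 < x₀ := by linarith
  have hx₀1 : x₀ < 1 := by linarith
  have lim1 : Tendsto (fun η : ℝ => M ^ η) (𝓝[>] 0) (𝓝 1) := by
    have : ContinuousAt (fun η : ℝ => M ^ η) 0 :=
      Real.continuousAt_const_rpow (by linarith)
    simpa using this.tendsto.mono_left nhdsWithin_le_nhds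
  have lim2 : Tendsto (fun η : ℝ => x₀ ^ (1 / (L * η) - 1)) (𝓝[>] 0) (𝓝 0) := by
    refine (tendsto_rpow_atTop_of_base_lt_one x₀ (by linarith) hx₀1).comp ?_
    refine tendsto_atTop_add_const_right _ _ ?_
    have : Tendsto (fun η : ℝ => L⁻¹ * η⁻¹) (𝓝[>] 0) atTop :=
      tendsto_inv_nhdsGT_zero.const_mul_atTop (by positivity)
    refine this.congr fun η => ?_
    rw [one_div, mul_inv]
  have ev1 : ∀ᶠ η in 𝓝[>] (0 : ℝ), M ^ η ≤ 1 + 1 / (2 * M) :=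
    lim1.eventually_le_const (by linarith [show 0 < 1 / (2 * M) by positivity])
  have ev2 : ∀ᶠ η in 𝓝[>] (0 : ℝ), x₀ ^ (1 / (L * η) - 1) ≤ 1 / (2 * L * C) :=
    lim2.eventually_le_const (by positivity)
  have ev3 : ∀ᶠ η in 𝓝[>] (0 : ℝ), η < min 1 (1 / L) :=
    (eventually_lt_nhds (by positivity)).filter_mono nhdsWithin_le_nhds
  obtain ⟨η, h1, h2, h3, hη⟩ := (ev1.and (ev2.and (ev3.and self_mem_nhdsWithin))).exists
  have hη0 : 0 < η := hη
  have hη1 : η < 1 := h3.trans_le (min_le_left _ _)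
  have hκ1 : L * η ≤ 1 := by
    have := (h3.trans_le (min_le_right _ _)).le
    rw [le_div_iff₀ hL] at this
    linarith
  refine ⟨η, hη0, hη1, fun X y H hX0 hX1 hy hyH hH1 hH2 => ?_⟩
  have hκ : 0 < L * η := by positivity
  set x : ℝ := X ^ (L * η) with hx
  have hx0 : 0 < x := by positivity
  have hx1 : x ≤ 1 := Real.rpow_le_one hX0.le hX1 hκ.le
  have hy0 : 0 < y := by linarith
  have hCX : 1 + (C - 1) * X ≤ C := by nlinarith
  have hCX0 : 1 ≤ 1 + (C - 1) * X := by nlinarith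
  have hCM : (1 + (C - 1) * X) ^ (L * η) ≤ M ^ η := by
    rw [hM, ← Real.rpow_mul (by linarith)]
    exact Real.rpow_le_rpow (by linarith) hCX hκ.le
  have hsplit : ∀ z : ℝ, 0 < z → z ≤ H → z ^ η * y ^ (1 - η) ≤ H := by
    intro z hz hzH
    have hH0 : 0 < H := hy0.trans_le hyH
    calc z ^ η * y ^ (1 - η) ≤ H ^ η * H ^ (1 - η) := by
          gcongr
      _ = H := by
          rw [← Real.rpow_add (by linarith), add_sub_cancel, Real.rpow_one]
  rcases le_or_gt M y with hMy | hMy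
  · exact (mul_le_mul_of_nonneg_right hCM (by positivity)).trans
      (hsplit M (by linarith) (hMy.trans hyH))
  rcases le_or_gt x₀ x with hxx | hxx
  · have hyη : y ^ (1 - η) ≤ y := by
      simpa using Real.rpow_le_rpow_of_exponent_le hy (show 1 - η ≤ 1 by linarith)
    have hu : 1 + 1 / (2 * M) ≤ x₀ * (1 + 1 / M) := by
      have e : x₀ * (1 + 1 / M) - (1 + 1 / (2 * M)) = (M - 1) / (4 * M ^ 2) := by
        rw [hx₀]
        field_simp
        ring
      have : 0 ≤ (M - 1) / (4 * M ^ 2) := div_nonneg (by linarith) (by positivity)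
      linarith
    have hyM : y * (1 + 1 / M) ≤ y + 1 := by
      have : y / M ≤ 1 := (div_le_one (by linarith)).mpr hMy.le
      calc y * (1 + 1 / M) = y + y / M := by ring
        _ ≤ _ := by linarith
    calc (1 + (C - 1) * X) ^ (L * η) * y ^ (1 - η) ≤ (x₀ * (1 + 1 / M)) * y := by
          gcongr
          linarith
      _ = x₀ * (y * (1 + 1 / M)) := by ring
      _ ≤ x * (y + 1) := by gcongr
      _ ≤ H := hH2
  · have hXx : X ≤ x * (1 / (2 * L * C)) := by
      calc X = x ^ (1 / (L * η)) := by
            rw [hx, ← Real.rpow_mul hX0.le, mul_one_div_cancel hκ.ne', Real.rpow_one]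
        _ = x * x ^ (1 / (L * η) - 1) := by
            rw [Real.rpow_sub hx0, Real.rpow_one]
            field_simp
        _ ≤ x * x₀ ^ (1 / (L * η) - 1) := by
            gcongr
            rw [sub_nonneg, le_div_iff₀ hκ]
            linarith
        _ ≤ _ := by gcongr
    have hexp : (1 + (C - 1) * X) ^ L ≤ 1 + x := by
      calc (1 + (C - 1) * X) ^ L ≤ (Real.exp (C * X)) ^ L := by
            gcongr
            linarith [Real.add_one_le_exp (C * X)]
        _ = Real.exp (L * (C * X)) := by rw [← Real.exp_mul, mul_comm]
        _ ≤ Real.exp (x / 2) := by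
            gcongr
            calc L * (C * X) ≤ L * (C * (x * (1 / (2 * L * C)))) := by gcongr
              _ = x / 2 := by field_simp
        _ ≤ 1 + x := by
            have hb := Real.exp_bound_div_one_sub_of_interval (x := x / 2) (by linarith)
              (by linarith)
            refine hb.trans ?_
            rw [div_le_iff₀ (by linarith)]
            nlinarith
    have : (1 + (C - 1) * X) ^ (L * η) ≤ (1 + x) ^ η := by
      rw [Real.rpow_mul (by linarith)]
      gcongr
    exact (mul_le_mul_of_nonneg_right this (by positivity)).trans
      (hsplit (1 + x) (by linarith) hH1)

lemma sum_add_le_sum_of_two_shifts {T U : Finset ℕ} {u w : ℕ → ℝ} {i₀ i₁ k : ℕ} (hi : i₀ ≠ i₁)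
    (hw : ∀ n, 0 ≤ w n) (hk : k ∈ T) (hU₀ : ∀ j ∈ T, j + i₀ ∈ U) (hU₁ : ∀ j ∈ T, j + i₁ ∈ U)
    (h₀ : ∀ j ∈ T, u j ≤ w (j + i₀)) (h₁ : ∀ j ∈ T, u j ≤ w (j + i₁)) :
    ∑ j ∈ T, u j + u k ≤ ∑ n ∈ U, w n := by
  wlog hlt : i₀ < i₁ generalizing i₀ i₁
  · exact this hi.symm hU₁ hU₀ h₁ h₀ (by lia)
  let P := {j ∈ T | j ≤ k}.image (· + i₀)
  let Q := {j ∈ T | k ≤ j}.image (· + i₁)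
  have hPQ : Disjoint P Q := by
    rw [disjoint_left]
    simp only [P, Q, mem_image, mem_filter]
    rintro n ⟨j, hj, rfl⟩ ⟨j', hj', h⟩
    lia
  have hsub : P ∪ Q ⊆ U := by
    intro n hn
    simp only [P, Q, mem_union, mem_image, mem_filter] at hn
    rcases hn with ⟨j, hj, rfl⟩ | ⟨j, hj, rfl⟩
    · exact hU₀ j hj.1
    · exact hU₁ j hj.1
  have hsplit : ∑ j ∈ T, u j + u k = ∑ j ∈ T with j ≤ k, u j + ∑ j ∈ T with k ≤ j, u j := by
    have hkk : {j ∈ T | k ≤ j} = insert k {j ∈ T | ¬ j ≤ k} := by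
      ext j
      simp only [mem_filter, mem_insert]
      constructor
      · rintro ⟨h1, h2⟩
        by_cases h : j = k
        · exact Or.inl h
        · exact Or.inr ⟨h1, by lia⟩
      · rintro (rfl | ⟨h1, h2⟩)
        · exact ⟨hk, le_rfl⟩
        · exact ⟨h1, by lia⟩
    rw [hkk, sum_insert (by simp), ← sum_filter_add_sum_filter_not T (· ≤ k)]
    ring
  calc ∑ j ∈ T, u j + u k = ∑ j ∈ T with j ≤ k, u j + ∑ j ∈ T with k ≤ j, u j := hsplit
    _ ≤ ∑ j ∈ T with j ≤ k, w (j + i₀) + ∑ j ∈ T with k ≤ j, w (j + i₁) := by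
        gcongr with j hj j hj
        · exact h₀ j (mem_filter.mp hj).1
        · exact h₁ j (mem_filter.mp hj).1
    _ = ∑ n ∈ P, w n + ∑ n ∈ Q, w n := by
        rw [sum_image (by intro a _ b _; simp), sum_image (by intro a _ b _; simp)]
    _ = ∑ n ∈ P ∪ Q, w n := (sum_union hPQ).symm
    _ ≤ ∑ n ∈ U, w n := sum_le_sum_of_subset_of_nonneg hsub fun n _ _ => hw n

/-- A one-dimensional sup-convolution inequality. -/
lemma rpow_sum_le_sum_of_two_shifts {C κ η X : ℝ} (hη0 : 0 < η) (hη1 : η < 1) (hκ : 0 < κ)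
    (hX0 : 0 < X) (hX1 : X ≤ 1)
    (hexp : ∀ y H : ℝ, 1 ≤ y → y ≤ H → 1 + X ^ κ ≤ H → X ^ κ * (y + 1) ≤ H →
      (1 + (C - 1) * X) ^ κ * y ^ (1 - η) ≤ H)
    {T U : Finset ℕ} {b w : ℕ → ℝ} {i₀ i₁ : ℕ} (hi : i₀ ≠ i₁) (hT : T.Nonempty)
    (hb : ∀ j ∈ T, 0 < b j) (hw : ∀ n, 0 ≤ w n)
    (hU₀ : ∀ j ∈ T, j + i₀ ∈ U) (hU₁ : ∀ j ∈ T, j + i₁ ∈ U)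
    (h₀ : ∀ j ∈ T, b j ^ (1 - η) ≤ w (j + i₀))
    (h₁ : ∀ j ∈ T, X ^ κ * b j ^ (1 - η) ≤ w (j + i₁)) (hC : 1 ≤ C) :
    (1 + (C - 1) * X) ^ κ * (∑ j ∈ T, b j) ^ (1 - η) ≤ ∑ n ∈ U, w n := by
  obtain ⟨k, hk, hmax⟩ := exists_max_image T b hT
  set x := X ^ κ with hx
  have hx0 : 0 < x := by positivity
  have hx1 : x ≤ 1 := Real.rpow_le_one hX0.le hX1 hκ.le
  have hbk := hb k hk
  set G := b k ^ (1 - η) with hG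
  have hG0 : 0 < G := by positivity
  set Γ := ∑ j ∈ T, b j ^ (1 - η) with hΓ
  have hg0 : ∀ j ∈ T, 0 ≤ b j ^ (1 - η) := fun j hj => (Real.rpow_pos_of_pos (hb j hj) _).le
  have hGΓ : G ≤ Γ := single_le_sum (f := fun j => b j ^ (1 - η)) hg0 hk
  have hH1 : Γ ≤ ∑ n ∈ U, w n := by
    calc Γ ≤ ∑ j ∈ T, w (j + i₀) := sum_le_sum h₀
      _ = ∑ n ∈ T.image (· + i₀), w n := by rw [sum_image (by intro a _ b _; simp)]
      _ ≤ _ := sum_le_sum_of_subset_of_nonneg (by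
          intro n hn
          obtain ⟨j, hj, rfl⟩ := mem_image.mp hn
          exact hU₀ j hj) fun n _ _ => hw n
  have hH2 : G + x * G ≤ ∑ n ∈ U, w n := by
    calc G + x * G ≤ w (k + i₀) + w (k + i₁) := add_le_add (h₀ k hk) (h₁ k hk)
      _ = ∑ n ∈ {k + i₀, k + i₁}, w n := by rw [sum_pair (by simpa using hi)]
      _ ≤ _ := sum_le_sum_of_subset_of_nonneg (by
          intro n hn
          rcases mem_insert.mp hn with rfl | hn
          · exact hU₀ k hk
          · rw [mem_singleton.mp hn]
            exact hU₁ k hk) fun n _ _ => hw n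
  have hH3 : x * Γ + x * G ≤ ∑ n ∈ U, w n := by
    rw [hΓ, mul_sum]
    refine sum_add_le_sum_of_two_shifts (u := fun j => x * b j ^ (1 - η)) hi hw hk hU₀ hU₁
      (fun j hj => ?_) h₁
    exact (mul_le_of_le_one_left (hg0 j hj) hx1).trans (h₀ j hj)
  have key := hexp (Γ / G) ((∑ n ∈ U, w n) / G) ((one_le_div hG0).mpr hGΓ) (by gcongr)
    (by rw [le_div_iff₀ hG0]; linarith)
    (by rw [le_div_iff₀ hG0, mul_assoc, add_mul, div_mul_cancel₀ _ hG0.ne']; linarith)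
  rw [le_div_iff₀ hG0] at key
  refine le_trans ?_ key
  rw [mul_assoc]
  have hCX : 0 ≤ 1 + (C - 1) * X := by nlinarith
  refine mul_le_mul_of_nonneg_left ?_ (by positivity)
  have hsum : ∑ j ∈ T, b j ≤ b k ^ η * Γ := by
    rw [hΓ, mul_sum]
    refine sum_le_sum fun j hj => ?_
    calc b j = b j ^ η * b j ^ (1 - η) := by
          rw [← Real.rpow_add (hb j hj), add_sub_cancel, Real.rpow_one]
      _ ≤ _ := by
          gcongr
          · exact hg0 j hj
          · exact (hb j hj).le
          · exact hmax j hj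
  have hΓ0 : 0 < Γ := hG0.trans_le hGΓ
  calc (∑ j ∈ T, b j) ^ (1 - η) ≤ (b k ^ η * Γ) ^ (1 - η) :=
        Real.rpow_le_rpow (sum_nonneg fun j hj => (hb j hj).le) hsum (by linarith)
    _ = G ^ η * Γ ^ (1 - η) := by
        rw [Real.mul_rpow (by positivity) hΓ0.le, hG, ← Real.rpow_mul hbk.le,
          ← Real.rpow_mul hbk.le, mul_comm η]
    _ = (Γ / G) ^ (1 - η) * G := by
        rw [Real.div_rpow hΓ0.le hG0.le, Real.rpow_sub hG0, Real.rpow_one]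
        field_simp

lemma exists_prime_padicValInt_ne {A : Finset ℤ} (hA : (0 : ℤ) ∉ A) (hcard : 2 < #A) :
    ∃ p : ℕ, p.Prime ∧ ∃ a ∈ A, ∃ b ∈ A, padicValInt p a ≠ padicValInt p b := by
  by_contra! hall
  obtain ⟨a, ha⟩ : A.Nonempty := card_pos.mp (by lia)
  have hsub : A ⊆ {a, -a} := by
    intro b hb
    have hne : ∀ c ∈ A, c ≠ 0 := fun c hc h0 => hA (h0 ▸ hc)
    have habs : b.natAbs = a.natAbs := by
      refine Nat.eq_of_factorization_eq (Int.natAbs_ne_zero.mpr (hne b hb))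
        (Int.natAbs_ne_zero.mpr (hne a ha)) fun p => ?_
      by_cases hp : p.Prime
      · rw [Nat.factorization_def _ hp, Nat.factorization_def _ hp]
        exact hall p hp b hb a ha
      · simp [Nat.factorization_eq_zero_of_not_prime _ hp]
    simpa using Int.natAbs_eq_natAbs_iff.mp habs
  have := (card_le_card hsub).trans card_le_two
  lia

lemma card_le_card_mul_of_zero_notMem {A : Finset ℤ} (hA : (0 : ℤ) ∉ A) (hne : A.Nonempty)
    (B : Finset ℤ) : #B ≤ #(A * B) := by
  obtain ⟨a, ha⟩ := hne
  have ha0 : a ≠ 0 := fun h0 => hA (h0 ▸ ha)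
  rw [← card_image_of_injective B (mul_right_injective₀ ha0)]
  refine card_le_card fun x hx => ?_
  obtain ⟨b, hb, rfl⟩ := mem_image.mp hx
  exact mul_mem_mul ha hb

/-- Multiplying by `A` makes sets grow unless `A` carries a well spread weight. -/
theorem exists_spread_and_card_mul_ge {h : ℕ} (hh : 2 ≤ h) {κ η : ℝ} (hη0 : 0 < η) (hη1 : η < 1)
    (hκ : 0 < κ)
    (hexp : ∀ X y H : ℝ, 0 < X → X ≤ 1 → 1 ≤ y → y ≤ H → 1 + X ^ κ ≤ H → X ^ κ * (y + 1) ≤ H →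
      (1 + ((2 * h) ^ 2 - 1) * X) ^ κ * y ^ (1 - η) ≤ H)
    (A : Finset ℤ) (hA : (0 : ℤ) ∉ A) (hne : A.Nonempty) :
    ∃ φ : ℝ, 0 < φ ∧ Spread h A φ ∧ ∀ B : Finset ℤ, (0 : ℤ) ∉ B →
      (#B : ℝ) ^ (1 - η) * (#A / (2 * φ)) ^ κ ≤ #(A * B) := by
  induction A using Finset.strongInduction with
  | H A ih =>
  rcases le_or_gt #A 2 with hcard | hcard
  · obtain ⟨a, ha⟩ := hne
    refine ⟨1, one_pos, spread_one_of_mem ha, fun B hB => ?_⟩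
    have h1 : ((#A : ℝ) / (2 * 1)) ^ κ ≤ 1 := by
      refine Real.rpow_le_one (by positivity) ?_ hκ.le
      have : (#A : ℝ) ≤ 2 := by exact_mod_cast hcard
      linarith
    have h2 : (#B : ℝ) ^ (1 - η) ≤ #B := by
      rcases B.eq_empty_or_nonempty with rfl | hBne
      · simp [Real.zero_rpow (show 1 - η ≠ 0 by linarith)]
      · have : (1 : ℝ) ≤ #B := by exact_mod_cast hBne.card_pos
        simpa using Real.rpow_le_rpow_of_exponent_le this (show 1 - η ≤ 1 by linarith)
    have h3 : #B ≤ #(A * B) := card_le_card_mul_of_zero_notMem hA ⟨a, ha⟩ B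
    calc (#B : ℝ) ^ (1 - η) * (#A / (2 * 1)) ^ κ ≤ #B * 1 := by gcongr
      _ ≤ #(A * B) := by
        rw [mul_one]
        exact_mod_cast h3
  obtain ⟨p, hp, a₁, ha₁, a₂, ha₂, hv⟩ := exists_prime_padicValInt_ne hA hcard
  have : Fact p.Prime := ⟨hp⟩
  set v := padicValInt p with hvdef
  let J := A.image v
  let fib : Finset ℤ → ℕ → Finset ℤ := fun S j => {a ∈ S | v a = j}
  have hfibne : ∀ j ∈ J, (fib A j).Nonempty := by
    intro j hj
    obtain ⟨a, ha, rfl⟩ := mem_image.mp hj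
    exact ⟨a, mem_filter.mpr ⟨ha, rfl⟩⟩
  have hfibss : ∀ j, fib A j ⊂ A := by
    intro j
    refine (filter_ssubset).mpr ?_
    by_cases h : v a₁ = j
    · exact ⟨a₂, ha₂, fun h' => hv (h.trans h'.symm)⟩
    · exact ⟨a₁, ha₁, h⟩
  have hrec : ∀ j ∈ J, ∃ φ : ℝ, 0 < φ ∧ Spread h (fib A j) φ ∧ ∀ B : Finset ℤ, (0 : ℤ) ∉ B →
      (#B : ℝ) ^ (1 - η) * (#(fib A j) / (2 * φ)) ^ κ ≤ #(fib A j * B) := fun j hj =>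
    ih _ (hfibss j) (fun h0 => hA (mem_filter.mp h0).1) (hfibne j hj)
  choose! φ hφ0 hφs hφg using hrec
  have hJ : J.Nonempty := hne.image v
  set C : ℝ := (2 * h) ^ 2 with hCdef
  have hC1 : 1 ≤ C := by
    have : (2 : ℝ) ≤ h := by exact_mod_cast hh
    rw [hCdef]
    nlinarith
  set S := ∑ j ∈ J, φ j with hS
  obtain ⟨Φ, hΦs, hΦ, hΦS⟩ : ∃ Φ, Spread h A Φ ∧ (∀ j ∈ J, φ j ≤ Φ) ∧ S ≤ C * Φ := by
    have hall : Spread h A (S / C) := Spread.of_fibres hh p hA (fun j hj => (hφ0 j hj).le) hφs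
    obtain ⟨m, hm, hmax⟩ := exists_max_image J φ hJ
    rcases le_total (φ m) (S / C) with hle | hle
    · exact ⟨S / C, hall, fun j hj => (hmax j hj).trans hle,
        (mul_div_cancel₀ S (by positivity)).ge⟩
    · refine ⟨φ m, (hφs m hm).mono (filter_subset _ _), hmax, ?_⟩
      rw [div_le_iff₀ (by positivity)] at hle
      linarith
  set ρ : ℕ → ℝ := fun j => #(fib A j) / φ j with hρ
  have hρ0 : ∀ j ∈ J, 0 < ρ j := fun j hj => by
    have h1 := hφ0 j hj
    have h2 : (0 : ℝ) < #(fib A j) := by exact_mod_cast (hfibne j hj).card_pos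
    positivity
  obtain ⟨i₀, hi₀, hmax₀⟩ := exists_max_image J ρ hJ
  have hJ' : (J.erase i₀).Nonempty := by
    by_cases h : v a₁ = i₀
    · exact ⟨v a₂, mem_erase.mpr ⟨fun h' => hv (h.trans h'.symm), mem_image_of_mem v ha₂⟩⟩
    · exact ⟨v a₁, mem_erase.mpr ⟨h, mem_image_of_mem v ha₁⟩⟩
  obtain ⟨i₁, hi₁, hmax₁⟩ := exists_max_image (J.erase i₀) ρ hJ'
  obtain ⟨hi, hi₁J⟩ := mem_erase.mp hi₁
  have hr₀ := hρ0 i₀ hi₀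
  have hr₁ := hρ0 i₁ hi₁J
  set X := ρ i₁ / ρ i₀ with hX
  have hX0 : 0 < X := by positivity
  have hX1 : X ≤ 1 := (div_le_one hr₀).mpr (hmax₀ i₁ hi₁J)
  have hΦ0 : 0 < Φ := (hφ0 i₀ hi₀).trans_le (hΦ i₀ hi₀)
  have hcardA : (#A : ℝ) ≤ ρ i₀ * Φ * (1 + (C - 1) * X) := by
    have e1 : (#A : ℝ) = ∑ j ∈ J, ρ j * φ j := by
      rw [card_eq_sum_card_image v A]
      push_cast
      refine sum_congr rfl fun j hj => ?_
      rw [hρ, div_mul_cancel₀ _ (hφ0 j hj).ne']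
    have e2 : ∑ j ∈ J.erase i₀, ρ j * φ j ≤ ρ i₁ * ∑ j ∈ J.erase i₀, φ j := by
      rw [mul_sum]
      refine sum_le_sum fun j hj => ?_
      exact mul_le_mul_of_nonneg_right (hmax₁ j hj) (hφ0 j (mem_of_mem_erase hj)).le
    have e3 : φ i₀ + ∑ j ∈ J.erase i₀, φ j = S := add_sum_erase J φ hi₀
    have e4 : ρ i₁ = ρ i₀ * X := by rw [hX]; field_simp
    rw [e1, ← add_sum_erase J _ hi₀]
    calc ρ i₀ * φ i₀ + ∑ j ∈ J.erase i₀, ρ j * φ j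
        ≤ ρ i₀ * φ i₀ + ρ i₁ * (S - φ i₀) := by
          rw [← e3]
          linarith
      _ = ρ i₀ * ((1 - X) * φ i₀ + X * S) := by rw [e4]; ring
      _ ≤ ρ i₀ * ((1 - X) * Φ + X * (C * Φ)) := by
          have hX1' : 0 ≤ 1 - X := by linarith
          exact mul_le_mul_of_nonneg_left (add_le_add
            (mul_le_mul_of_nonneg_left (hΦ i₀ hi₀) hX1')
            (mul_le_mul_of_nonneg_left hΦS hX0.le)) hr₀.le
      _ = _ := by ring
  refine ⟨Φ, hΦ0, hΦs, fun B hB => ?_⟩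
  rcases B.eq_empty_or_nonempty with rfl | hBne
  · simp [Real.zero_rpow (show 1 - η ≠ 0 by linarith)]
  set R := (ρ i₀ / 2) ^ κ with hR
  have hR0 : 0 < R := by positivity
  have hmulv : ∀ i j, ∀ a ∈ fib A i, ∀ b ∈ fib B j, a * b ∈ fib (A * B) (j + i) := by
    intro i j a ha b hb
    obtain ⟨haA, rfl⟩ := mem_filter.mp ha
    obtain ⟨hbB, rfl⟩ := mem_filter.mp hb
    refine mem_filter.mpr ⟨mul_mem_mul haA hbB, ?_⟩
    rw [hvdef, padicValInt.mul (fun h0 => hA (h0 ▸ haA)) (fun h0 => hB (h0 ▸ hbB)), add_comm]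
  have hstep : ∀ i ∈ J, ∀ j, (#(fib B j) : ℝ) ^ (1 - η) * (ρ i / 2) ^ κ ≤
      #(fib (A * B) (j + i)) := by
    intro i hi j
    have h1 := hφg i hi (fib B j) fun h0 => hB (mem_filter.mp h0).1
    have e : (#(fib A i) : ℝ) / (2 * φ i) = ρ i / 2 := by rw [hρ]; ring
    rw [e] at h1
    refine h1.trans ?_
    have : fib A i * fib B j ⊆ fib (A * B) (j + i) := by
      intro x hx
      obtain ⟨a, ha, b, hb, rfl⟩ := mem_mul.mp hx
      exact hmulv i j a ha b hb
    exact_mod_cast card_le_card this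
  have hU : ∀ i ∈ J, ∀ j ∈ B.image v, j + i ∈ (A * B).image v := by
    intro i hi j hj
    obtain ⟨a, ha⟩ := hfibne i hi
    obtain ⟨b, hb, rfl⟩ := mem_image.mp hj
    obtain ⟨h1, h2⟩ := mem_filter.mp (hmulv i (v b) a ha b (mem_filter.mpr ⟨hb, rfl⟩))
    exact mem_image.mpr ⟨_, h1, h2⟩
  have key := rpow_sum_le_sum_of_two_shifts (C := C) hη0 hη1 hκ hX0 hX1
    (fun y H => hexp X y H hX0 hX1) (T := B.image v) (U := (A * B).image v)
    (b := fun j => (#(fib B j) : ℝ)) (w := fun n => (#(fib (A * B) n) : ℝ) / R)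
    hi.symm (hBne.image v)
    (fun j hj => by
      obtain ⟨b, hb, rfl⟩ := mem_image.mp hj
      have hbfib : b ∈ fib B (v b) := mem_filter.mpr ⟨hb, rfl⟩
      exact_mod_cast card_pos.mpr ⟨b, hbfib⟩)
    (fun n => by positivity) (hU i₀ hi₀) (hU i₁ hi₁J)
    (fun j _ => (le_div_iff₀ hR0).mpr (hstep i₀ hi₀ j))
    (fun j _ => by
      rw [le_div_iff₀ hR0]
      refine le_of_eq_of_le ?_ (hstep i₁ hi₁J j)
      have e4 : ρ i₁ / 2 = X * (ρ i₀ / 2) := by rw [hX]; field_simp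
      rw [e4, Real.mul_rpow hX0.le (by positivity)]
      ring) hC1
  rw [← sum_div] at key
  have hBsum : ∑ j ∈ B.image v, (#(fib B j) : ℝ) = #B := by
    exact_mod_cast (card_eq_sum_card_image v B).symm
  have hABsum : ∑ n ∈ (A * B).image v, (#(fib (A * B) n) : ℝ) = #(A * B) := by
    exact_mod_cast (card_eq_sum_card_image v (A * B)).symm
  rw [hBsum, hABsum, le_div_iff₀ hR0] at key
  refine le_trans ?_ key
  have hCX : 0 ≤ 1 + (C - 1) * X := by nlinarith
  calc (#B : ℝ) ^ (1 - η) * (#A / (2 * Φ)) ^ κ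
      ≤ (#B : ℝ) ^ (1 - η) * ((ρ i₀ / 2) * (1 + (C - 1) * X)) ^ κ := by
        gcongr
        rw [div_le_iff₀ (by positivity)]
        linarith
    _ = _ := by
        rw [Real.mul_rpow (by positivity) hCX]
        ring

lemma lt_card_nsmul {A : Finset ℤ} (hA : 2 ≤ #A) (k : ℕ) : k < #(k • A) := by
  have hne : A.Nonempty := card_pos.mp (by lia)
  induction k with
  | zero => simp
  | succ k ih =>
    have := cauchy_davenport_add_of_linearOrder_isCancelAdd (hne.nsmul (n := k)) hne
    rw [succ_nsmul]
    lia

lemma exists_card_pow_succ_le {A : Finset ℤ} {q : ℝ} (hq : 0 ≤ q) {k : ℕ}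
    (hk : (#(A ^ k) : ℝ) < q ^ k) : ∃ i < k, (#(A * A ^ i) : ℝ) ≤ q * #(A ^ i) := by
  by_contra! hall
  have : ∀ i ≤ k, q ^ i ≤ #(A ^ i) := by
    intro i
    induction i with
    | zero => simp
    | succ i ih =>
      intro hi
      rw [pow_succ', pow_succ']
      exact (mul_le_mul_of_nonneg_left (ih (by lia)) hq).trans (hall i (by lia)).le
  exact absurd (this k le_rfl) (not_le.mpr hk)

lemma zero_notMem_pow {A : Finset ℤ} (hA : (0 : ℤ) ∉ A) (k : ℕ) : (0 : ℤ) ∉ A ^ k := by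
  induction k with
  | zero => simp
  | succ k ih =>
    rw [pow_succ, mem_mul]
    rintro ⟨a, ha, b, hb, hab⟩
    rcases mul_eq_zero.mp hab with rfl | rfl
    · exact ih ha
    · exact hA hb

/-- The sum-product growth theorem for finite sets of nonzero integers. -/
theorem exists_rpow_card_le_max_nsmul_pow (b : ℝ) (hb : 0 ≤ b) :
    ∃ k : ℕ, 0 < k ∧ ∀ A : Finset ℤ, (0 : ℤ) ∉ A → 2 ≤ #A →
      (#A : ℝ) ^ b ≤ max (#(k • A) : ℝ) (#(A ^ k) : ℝ) := by
  set h : ℕ := ⌈4 * b⌉₊ + 2 with hh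
  have hh2 : 2 ≤ h := by lia
  have hhb : 4 * b ≤ h := by
    rw [hh]
    push_cast
    linarith [Nat.le_ceil (4 * b)]
  set L : ℝ := 4 * b + 1 with hL
  have hL0 : 0 < L := by positivity
  have hC : (1 : ℝ) ≤ (2 * h) ^ 2 := by
    have : (2 : ℝ) ≤ h := by exact_mod_cast hh2
    nlinarith
  obtain ⟨η, hη0, hη1, hexp⟩ := exists_exponent ((2 * h) ^ 2) L hC hL0
  have hκ : 0 < L * η := by positivity
  obtain ⟨k, hk⟩ := exists_nat_ge (max (h : ℝ) (max (1 / η) (16 ^ b)))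
  obtain ⟨hkh, hkη, hk16⟩ : (h : ℝ) ≤ k ∧ 1 / η ≤ k ∧ (16 : ℝ) ^ b ≤ k := by
    simpa only [max_le_iff] using hk
  have hkh' : h ≤ k := by exact_mod_cast hkh
  have hk0 : (0 : ℝ) < k := by
    have : 0 < k := by lia
    exact_mod_cast this
  refine ⟨k, by lia, fun A hA hcard => ?_⟩
  have hne : A.Nonempty := card_pos.mp (by lia)
  set N : ℝ := (#A : ℝ) with hN
  have hN2 : (2 : ℝ) ≤ N := Nat.ofNat_le_cast.mpr hcard
  have hN0 : 0 < N := by linarith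
  rcases le_or_gt N 16 with hN16 | hN16
  · refine le_trans ?_ (le_max_left _ _)
    calc N ^ b ≤ 16 ^ b := by gcongr
      _ ≤ k := hk16
      _ ≤ #(k • A) := by exact_mod_cast (lt_card_nsmul hcard k).le
  rcases le_or_gt (N ^ b) #(A ^ k) with hprod | hprod
  · exact hprod.trans (le_max_right _ _)
  refine le_trans ?_ (le_max_left _ _)
  obtain ⟨i, hik, hi⟩ := exists_card_pow_succ_le (A := A) (q := N ^ (b / k)) (k := k)
    (by positivity) (by
      rwa [← Real.rpow_mul_natCast hN0.le, div_mul_cancel₀ _ hk0.ne'])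
  obtain ⟨φ, hφ0, hφs, hφg⟩ :=
    exists_spread_and_card_mul_ge hh2 hη0 hη1 hκ hexp A hA hne
  have hgrow := (hφg (A ^ i) (zero_notMem_pow hA i)).trans hi
  set β : ℝ := (#(A ^ i) : ℝ) with hβ
  have hβ0 : 0 < β := Nat.cast_pos.mpr (hne.pow (n := i)).card_pos
  have hβN : β ≤ N ^ b := by
    have hmono : Monotone fun n : ℕ => #(A ^ n) := monotone_nat_of_le_succ fun n => by
      rw [pow_succ']
      exact card_le_card_mul_of_zero_notMem hA hne _
    have : β ≤ #(A ^ k) := Nat.cast_le.mpr (hmono hik.le)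
    exact this.trans hprod.le
  have hratio : (N / (2 * φ)) ^ (L * η) ≤ N ^ (2 * b * η) := by
    have h1 : (N / (2 * φ)) ^ (L * η) ≤ N ^ (b / k) * β ^ η := by
      have e : β = β ^ (1 - η) * β ^ η := by
        rw [← Real.rpow_add hβ0, sub_add_cancel, Real.rpow_one]
      have h2 : 0 < β ^ (1 - η) := Real.rpow_pos_of_pos hβ0 _
      refine le_of_mul_le_mul_left (hgrow.trans_eq ?_) h2
      nth_rewrite 1 [e]
      ring
    calc (N / (2 * φ)) ^ (L * η) ≤ N ^ (b / k) * β ^ η := h1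
      _ ≤ N ^ (b * η) * (N ^ b) ^ η := by
          gcongr
          · linarith
          · rw [div_le_iff₀ hk0, mul_assoc]
            rw [div_le_iff₀ hη0] at hkη
            nlinarith
      _ = N ^ (2 * b * η) := by
          rw [← Real.rpow_mul hN0.le, ← Real.rpow_add hN0]
          ring_nf
  have hsqrt : N / (2 * φ) ≤ N ^ (1 / 2 : ℝ) := by
    have hle : (N / (2 * φ)) ^ (L * η) ≤ (N ^ (1 / 2 : ℝ)) ^ (L * η) := by
      refine hratio.trans ?_
      rw [← Real.rpow_mul hN0.le]
      refine Real.rpow_le_rpow_of_exponent_le (by linarith) ?_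
      rw [hL]
      nlinarith
    exact (Real.rpow_le_rpow_iff (by positivity) (by positivity) hκ).mp hle
  have hφN : N ^ (1 / 4 : ℝ) ≤ φ := by
    have h4 : (2 : ℝ) ≤ N ^ (1 / 4 : ℝ) := by
      calc (2 : ℝ) = (2 ^ (4 : ℝ)) ^ (1 / 4 : ℝ) := by
            rw [← Real.rpow_mul (by norm_num)]
            norm_num
        _ = 16 ^ (1 / 4 : ℝ) := by norm_num
        _ ≤ _ := by gcongr
    have hquarter : N ^ (1 / 2 : ℝ) * (N ^ (1 / 4 : ℝ) * N ^ (1 / 4 : ℝ)) = N := by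
      rw [← Real.rpow_add hN0, ← Real.rpow_add hN0]
      norm_num
    rw [div_le_iff₀ (by positivity)] at hsqrt
    have h5 : N ^ (1 / 4 : ℝ) * N ^ (1 / 4 : ℝ) ≤ 2 * φ := by
      refine le_of_mul_le_mul_left ?_ (show 0 < N ^ (1 / 2 : ℝ) by positivity)
      rwa [hquarter]
    nlinarith
  calc N ^ b ≤ N ^ ((1 / 4 : ℝ) * h) := by
        refine Real.rpow_le_rpow_of_exponent_le (by linarith) ?_
        linarith
    _ = (N ^ (1 / 4 : ℝ)) ^ h := Real.rpow_mul_natCast hN0.le _ _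
    _ ≤ φ ^ h := by gcongr
    _ ≤ #(h • A) := hφs.pow_le_card_nsmul hφ0
    _ ≤ #(k • A) := by exact_mod_cast hne.card_nsmul_mono hkh'

lemma exists_int_dilate (A : Finset ℚ) :
    ∃ (D : ℚ) (A' : Finset ℤ), D ≠ 0 ∧ #A' = #A ∧ ∀ n ∈ A', (n : ℚ) / D ∈ A := by
  set D : ℕ := ∏ a ∈ A, a.den with hD
  have hD0 : (D : ℚ) ≠ 0 := by
    rw [hD, Nat.cast_ne_zero]
    exact prod_ne_zero_iff.mpr fun a _ => a.den_nz
  have hnum : ∀ a ∈ A, ∃ n : ℤ, (n : ℚ) = a * D := by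
    intro a ha
    obtain ⟨c, hc⟩ := dvd_prod_of_mem (fun a : ℚ => a.den) ha
    refine ⟨a.num * c, ?_⟩
    rw [hD, hc]
    push_cast
    rw [← mul_assoc, Rat.mul_den_eq_num]
  choose! F hF using hnum
  refine ⟨D, A.image F, hD0, card_image_of_injOn ?_, ?_⟩
  · intro a ha a' ha' h
    have : a * D = a' * D := by rw [← hF a ha, ← hF a' ha', h]
    exact mul_right_cancel₀ hD0 this
  · intro n hn
    obtain ⟨a, ha, rfl⟩ := mem_image.mp hn
    rwa [hF a ha, mul_div_cancel_right₀ _ hD0]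

lemma card_nsmul_le_card_kfoldSum {A : Finset ℚ} {A' : Finset ℤ} {D : ℚ} (hD : D ≠ 0)
    (hA : ∀ n ∈ A', (n : ℚ) / D ∈ A) (k : ℕ) : #(k • A') ≤ #(kfoldSum k A) := by
  refine card_le_card_of_injOn (fun n : ℤ => (n : ℚ) / D) ?_ ?_
  · intro n hn
    obtain ⟨f, rfl⟩ := mem_nsmul.mp hn
    refine mem_image.mpr ⟨fun i => ((f i : ℤ) : ℚ) / D,
      Fintype.mem_piFinset.mpr fun i => hA _ (f i).2, ?_⟩
    simp [List.sum_ofFn, sum_div]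
  · intro m _ n _ h
    simpa [div_left_inj' hD] using h

lemma card_pow_le_card_kfoldProd {A : Finset ℚ} {A' : Finset ℤ} {D : ℚ} (hD : D ≠ 0)
    (hA : ∀ n ∈ A', (n : ℚ) / D ∈ A) (k : ℕ) : #(A' ^ k) ≤ #(kfoldProd k A) := by
  refine card_le_card_of_injOn (fun n : ℤ => (n : ℚ) / D ^ k) ?_ ?_
  · intro n hn
    obtain ⟨f, rfl⟩ := mem_pow.mp hn
    refine mem_image.mpr ⟨fun i => ((f i : ℤ) : ℚ) / D,
      Fintype.mem_piFinset.mpr fun i => hA _ (f i).2, ?_⟩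
    simp [List.prod_ofFn, prod_div_distrib]
  · intro m _ n _ h
    simpa [div_left_inj' (pow_ne_zero k hD)] using h

theorem bourgain_chang_unbounded_growth (b : ℝ) (hb : 0 ≤ b) :
    ∃ k : ℕ, 0 < k ∧ ∀ A : Finset ℚ, (0 : ℚ) ∉ A → 2 ≤ A.card →
      (A.card : ℝ) ^ b ≤
        max (((kfoldSum k A).card : ℝ)) (((kfoldProd k A).card : ℝ)) := by
  obtain ⟨k, hk, hgrow⟩ := exists_rpow_card_le_max_nsmul_pow b hb
  refine ⟨k, hk, fun A hA hcard => ?_⟩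
  obtain ⟨D, A', hD, hcard', hmem⟩ := exists_int_dilate A
  have hA' : (0 : ℤ) ∉ A' := fun h0 => hA (by simpa using hmem 0 h0)
  rw [← hcard'] at hcard ⊢
  refine (hgrow A' hA' hcard).trans (max_le_max ?_ ?_)
  · exact_mod_cast card_nsmul_le_card_kfoldSum hD hmem k
  · exact_mod_cast card_pow_le_card_kfoldProd hD hmem k
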